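/- Let φ ∈ Γ₀(H) satisfy φ*(H) ⊂ (−∞,0] ∪ {+∞} and (φ*)⁻¹((−∞,0)) ≠ ∅, let s ∈ Γ₀(G) be such that S = s⁻¹((0,+∞)) ≠ ∅, let γ ∈ (0,+∞), and let (x,y) ∈ Ξ₁. Then the unique η ∈ [0,+∞) satisfying φ*( prox_{((1/γ)·s_▲(prox_{(γη)⊙s_▲} y))⊙φ*}(x/γ) ) + η = 0 equals 0, and prox_{γ(φ▷s)}(x,y) = ( x − γ·proj_{cl dom φ*}(x/γ), proj_{cl conv S} y ). -/

import Mathlib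

open scoped Classical

noncomputable section

/-- Effective domain of an extended-real-valued function. -/
def edom {E : Type*} (f : E → EReal) : Set E := {x | f x < ⊤}

/-- Convexity of an extended-real-valued function, via its epigraph. -/
def ConvexEpi {E : Type*} [AddCommGroup E] [Module ℝ E] (f : E → EReal) : Prop :=
  Convex ℝ {p : E × ℝ | f p.1 ≤ (p.2 : EReal)}

/-- `f ∈ Γ₀(E)`: proper, lower semicontinuous, convex, with values in `(-∞, +∞]`. -/
def IsGamma0 {E : Type*} [AddCommGroup E] [Module ℝ E] [TopologicalSpace E]
    (f : E → EReal) : Prop :=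
  (∃ x, f x ≠ ⊤) ∧ (∀ x, f x ≠ ⊥) ∧ LowerSemicontinuous f ∧ ConvexEpi f

/-- Proximity operator: the (unique, for `f ∈ Γ₀`) minimizer of
`y ↦ f y + ‖x - y‖² / 2`. -/
def prox {E : Type*} [NormedAddCommGroup E] [InnerProductSpace ℝ E]
    (f : E → EReal) (x : E) : E :=
  Classical.epsilon fun p =>
    ∀ y, f p + ((‖x - p‖ ^ 2 / 2 : ℝ) : EReal) ≤ f y + ((‖x - y‖ ^ 2 / 2 : ℝ) : EReal)

/-- Metric projection onto a set. -/
def projC {E : Type*} [NormedAddCommGroup E] (C : Set E) (x : E) : E :=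
  Classical.epsilon fun p => p ∈ C ∧ ∀ y ∈ C, ‖x - p‖ ≤ ‖x - y‖

/-- Fenchel conjugate. -/
def fconj {E : Type*} [NormedAddCommGroup E] [InnerProductSpace ℝ E]
    (f : E → EReal) (y : E) : EReal :=
  ⨆ x, ((inner ℝ x y : ℝ) : EReal) - f x

/-- Plain scalar multiple `ξ·f`. -/
def smulE {E : Type*} (ξ : ℝ) (f : E → EReal) : E → EReal := fun x => (ξ : EReal) * f x

/-- The operation `ξ ⊙ f`: indicator of `cl (dom f)` if `ξ = 0`, and `ξ·f` if `ξ > 0`. -/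
def rscale {E : Type*} [TopologicalSpace E] (ξ : ℝ) (f : E → EReal) : E → EReal :=
  if ξ = 0 then fun x => if x ∈ closure (edom f) then (0 : EReal) else ⊤
  else fun x => (ξ : EReal) * f x

/-- `f^∨`: agrees with `f` where `-∞ < f < 0`, and is `+∞` elsewhere. -/
def pbas {E : Type*} (f : E → EReal) : E → EReal :=
  fun x => if ⊥ < f x ∧ f x < 0 then f x else ⊤

/-- `f^∧`: agrees with `f` where `0 < f < +∞`, and is `+∞` elsewhere. -/
def phaut {E : Type*} (f : E → EReal) : E → EReal :=
  fun x => if 0 < f x ∧ f x < ⊤ then f x else ⊤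

/-- `f_▽ = (f^∨)**`. -/
def basEnv {E : Type*} [NormedAddCommGroup E] [InnerProductSpace ℝ E]
    (f : E → EReal) : E → EReal :=
  fconj (fconj (pbas f))

/-- `f_▲ = (f^∧)**`. -/
def hautEnv {E : Type*} [NormedAddCommGroup E] [InnerProductSpace ℝ E]
    (f : E → EReal) : E → EReal :=
  fconj (fconj (phaut f))

/-- `S = s⁻¹((0, +∞))`. -/
def sdom {G : Type*} (s : G → EReal) : Set G := {v | 0 < s v ∧ s v < ⊤}

/-- The preperspective `φ ⋉ s`, on the Hilbert direct sum `H ⊕ G`. -/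
def prePersp {H G : Type*} [NormedAddCommGroup H] [InnerProductSpace ℝ H]
    [NormedAddCommGroup G] [InnerProductSpace ℝ G]
    (φ : H → EReal) (s : G → EReal) : WithLp 2 (H × G) → EReal := fun q =>
  if 0 < s ((WithLp.equiv 2 (H × G)) q).2 ∧ s ((WithLp.equiv 2 (H × G)) q).2 < ⊤ then
    s ((WithLp.equiv 2 (H × G)) q).2 *
      φ ((s ((WithLp.equiv 2 (H × G)) q).2).toReal⁻¹ • ((WithLp.equiv 2 (H × G)) q).1)
  else ⊤

/-- The perspective `φ ▷ s`: the largest lower semicontinuous convex minorant of the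
preperspective `φ ⋉ s`, on the Hilbert direct sum `H ⊕ G`. -/
def persp {H G : Type*} [NormedAddCommGroup H] [InnerProductSpace ℝ H]
    [NormedAddCommGroup G] [InnerProductSpace ℝ G]
    (φ : H → EReal) (s : G → EReal) : WithLp 2 (H × G) → EReal := fun q =>
  sSup {t : EReal | ∃ g : WithLp 2 (H × G) → EReal,
    LowerSemicontinuous g ∧ ConvexEpi g ∧ (∀ r, g r ≤ prePersp φ s r) ∧ t = g q}

/-- The point `(x, y)` in the Hilbert direct sum `H ⊕ G`. -/
def pairHG {H G : Type*} (x : H) (y : G) : WithLp 2 (H × G) :=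
  (WithLp.equiv 2 (H × G)).symm (x, y)

end
noncomputable section

/-- `Ξ₁` of Proposition 4.3. -/
def Xi1 {H G : Type*} [NormedAddCommGroup H] [InnerProductSpace ℝ H]
    [NormedAddCommGroup G] [InnerProductSpace ℝ G]
    (φ : H → EReal) (s : G → EReal) (γ : ℝ) : Set (H × G) :=
  {p | hautEnv s (projC (closure (convexHull ℝ (sdom s))) p.2) = 0 ∧
       fconj φ (projC (closure (edom (fconj φ))) (γ⁻¹ • p.1)) = 0}

/-- `Ξ₂` of Proposition 4.3. -/
def Xi2 {H G : Type*} [NormedAddCommGroup H] [InnerProductSpace ℝ H]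
    [NormedAddCommGroup G] [InnerProductSpace ℝ G]
    (φ : H → EReal) (s : G → EReal) (γ : ℝ) : Set (H × G) :=
  {p | (0 < hautEnv s (projC (closure (convexHull ℝ (sdom s))) p.2) ∧
        hautEnv s (projC (closure (convexHull ℝ (sdom s))) p.2) < ⊤) ∧
       fconj φ (prox (smulE (γ⁻¹ * (hautEnv s (projC (closure (convexHull ℝ (sdom s))) p.2)).toReal)
          (fconj φ)) (γ⁻¹ • p.1)) = 0}

/-- `Ξ₃` of Proposition 4.3. -/
def Xi3 {H G : Type*} [NormedAddCommGroup H] [InnerProductSpace ℝ H]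
    [NormedAddCommGroup G] [InnerProductSpace ℝ G]
    (φ : H → EReal) (s : G → EReal) (γ : ℝ) : Set (H × G) :=
  {p | hautEnv s (prox (smulE (γ * (-(fconj φ (projC (closure (edom (fconj φ))) (γ⁻¹ • p.1)))).toReal)
          (hautEnv s)) p.2) = 0 ∧
       fconj φ (projC (closure (edom (fconj φ))) (γ⁻¹ • p.1)) < 0}

/-- The equation (4.4) for `η` in Theorem 4.1(iii). -/
def eta9eq {H G : Type*} [NormedAddCommGroup H] [InnerProductSpace ℝ H]
    [NormedAddCommGroup G] [InnerProductSpace ℝ G]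
    (φ : H → EReal) (s : G → EReal) (γ : ℝ) (x : H) (y : G) (η : ℝ) : Prop :=
  fconj φ (prox (rscale (γ⁻¹ * (hautEnv s (prox (rscale (γ * η) (hautEnv s)) y)).toReal)
      (fconj φ)) (γ⁻¹ • x)) + (η : EReal) = 0

end

/-!
Write `p` and `q` for the two projections and `a = x - γ p`. The point `(a, q)` is the proximal
point because `(p, (y - q) / γ)` is a subgradient of `φ ▷ s` there. As `φ* p ≤ 0` and `(y - q) / γ`
is normal to `conv S` at `q`, the affine function `⟨·, p⟩ + ⟨· - q, (y - q) / γ⟩` minorizes `φ ⋉ s`,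
hence also `φ ▷ s`. Equality at `(a, q)` requires `(φ ▷ s)(a, q) ≤ ⟨a, p⟩ = σ(a)`, where `σ` is the
support function of `dom φ*`. The epigraph of a biconjugate is the closed convex hull of the
epigraph, so `s_▲ q = 0` makes `(q, 0)` a limit of convex combinations of points `(v, s v)` with
`v ∈ S`. At `(s v • w + a, v)`, with `φ w ≤ c`, a lower semicontinuous convex minorant of `φ ⋉ s` is
at most `s v * c + σ(a)`, because `σ` is the recession function of `φ**`. This bound is affine in
`(v, s v)`, so it passes to convex combinations and to the limit `(q, 0)`, where it reads `σ(a)`.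
-/

section Epigraph

variable {E : Type*}

/-- The epigraph of an extended-real-valued function, restricted to real heights as in `ConvexEpi`,
so that it lives in the vector space `E × ℝ`. -/
def epigraph (f : E → EReal) : Set (E × ℝ) := {z | f z.1 ≤ z.2}

theorem fst_image_epigraph (f : E → EReal) : Prod.fst '' epigraph f = edom f := by
  ext v
  constructor
  · rintro ⟨z, hz, rfl⟩
    exact lt_of_le_of_lt hz (EReal.coe_lt_top z.2)
  · intro hv
    obtain ⟨r, hr, -⟩ := EReal.lt_iff_exists_real_btwn.1 hv
    exact ⟨(v, r), hr.le, rfl⟩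

theorem edom_nonempty_iff {f : E → EReal} : (edom f).Nonempty ↔ (epigraph f).Nonempty := by
  rw [← fst_image_epigraph, Set.image_nonempty]

theorem mem_edom_of_eq_zero {f : E → EReal} {v : E} (h : f v = 0) : v ∈ edom f :=
  h.trans_lt EReal.zero_lt_top

theorem isClosed_epigraph [TopologicalSpace E] {f : E → EReal}
    (hf : LowerSemicontinuous f) : IsClosed (epigraph f) :=
  hf.isClosed_epigraph.preimage (continuous_id.prodMap continuous_coe_real_ereal)

theorem convexEpi_iff [AddCommGroup E] [Module ℝ E] {f : E → EReal} :
    ConvexEpi f ↔ Convex ℝ (epigraph f) :=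
  Iff.rfl

theorem ConvexEpi.convex_edom [AddCommGroup E] [Module ℝ E] {f : E → EReal} (hf : ConvexEpi f) :
    Convex ℝ (edom f) :=
  fst_image_epigraph f ▸ (convexEpi_iff.1 hf).linear_image (LinearMap.fst ℝ E ℝ)

theorem exists_mem_convexHull_graph_le [AddCommGroup E] [Module ℝ E] {f : E → EReal}
    (hf : ∀ v, 0 ≤ f v) {w : E × ℝ} (hw : w ∈ convexHull ℝ (epigraph f)) :
    ∃ t : ℝ, (w.1, t) ∈ convexHull ℝ {z : E × ℝ | f z.1 = z.2} ∧ 0 ≤ t ∧ t ≤ w.2 := by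
  have hgraph : epigraph f ⊆ {w | ∃ t : ℝ, (w.1, t) ∈ convexHull ℝ {z : E × ℝ | f z.1 = z.2} ∧
      0 ≤ t ∧ t ≤ w.2} := by
    intro z hz
    have hcoe : ((f z.1).toReal : EReal) = f z.1 := EReal.coe_toReal
      (ne_top_of_le_ne_top (EReal.coe_ne_top _) hz)
      (ne_bot_of_le_ne_bot EReal.zero_ne_bot (hf z.1))
    exact ⟨(f z.1).toReal, subset_convexHull ℝ _ hcoe.symm, EReal.toReal_nonneg (hf z.1),
      EReal.coe_le_coe_iff.1 (hcoe.trans_le hz)⟩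
  refine convexHull_min hgraph ?_ hw
  rintro z ⟨t, ht, ht₀, htz⟩ w ⟨r, hr, hr₀, hrw⟩ a b ha hb hab
  refine ⟨a * t + b * r, convex_convexHull ℝ _ ht hr ha hb hab, by positivity, ?_⟩
  change _ ≤ a * z.2 + b * w.2
  gcongr

theorem closure_convexHull_subset_preimage_epigraph [AddCommGroup E] [Module ℝ E]
    [TopologicalSpace E] {F : Type*} [AddCommGroup F] [Module ℝ F] [TopologicalSpace F]
    {g : E → EReal} (hlsc : LowerSemicontinuous g) (hcv : ConvexEpi g) {L : F →ᴬ[ℝ] E × ℝ}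
    {A : Set F} (h : A ⊆ L ⁻¹' epigraph g) : closure (convexHull ℝ A) ⊆ L ⁻¹' epigraph g :=
  closure_minimal (convexHull_min h ((convexEpi_iff.1 hcv).affine_preimage L.toAffineMap))
    ((isClosed_epigraph hlsc).preimage L.continuous)

end Epigraph

section Conjugate

variable {E : Type*} [NormedAddCommGroup E] [InnerProductSpace ℝ E] {f : E → EReal}

theorem fconj_le_coe_iff {u : E} {r : ℝ} :
    fconj f u ≤ r ↔ ∀ z ∈ epigraph f, inner ℝ z.1 u - z.2 ≤ r := by
  constructor
  · intro h z hz
    exact EReal.coe_le_coe_iff.1 <| (EReal.sub_le_sub le_rfl hz).trans <|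
      (le_iSup (fun v ↦ ((inner ℝ v u : ℝ) : EReal) - f v) z.1).trans h
  · refine fun h ↦ iSup_le fun v ↦ ?_
    induction hv : f v using EReal.rec with
    | bot =>
      have := h (v, inner ℝ v u - r - 1) (by simp [epigraph, hv])
      linarith
    | top => simp
    | coe t => exact EReal.coe_le_coe_iff.2 (h (v, t) hv.le)

theorem inner_sub_le_of_fconj_le {u : E} {r : ℝ} (h : fconj f u ≤ r) (v : E) :
    ((inner ℝ v u - r : ℝ) : EReal) ≤ f v :=
  EReal.le_of_forall_lt_iff_le.1 fun t ht ↦ EReal.coe_le_coe_iff.2 <| by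
    linarith [fconj_le_coe_iff.1 h (v, t) ht.le]

theorem edom_nonempty_of_fconj_ne_bot {u : E} (h : fconj f u ≠ ⊥) : (edom f).Nonempty := by
  by_contra! hempty
  have htop (v : E) : f v = ⊤ :=
    not_lt_top_iff.1 fun hv ↦ Set.eq_empty_iff_forall_notMem.1 hempty v hv
  exact h (by simp [fconj, htop])

theorem epigraph_fconj (f : E → EReal) :
    epigraph (fconj f) = ⋂ z ∈ epigraph f, {p | inner ℝ z.1 p.1 - p.2 ≤ z.2} := by
  ext p
  simp only [epigraph, Set.mem_ofPred_eq, Set.mem_iInter, fconj_le_coe_iff]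
  exact forall₂_congr fun z _ ↦ sub_le_comm

theorem convexEpi_fconj (f : E → EReal) : ConvexEpi (fconj f) := by
  rw [convexEpi_iff, epigraph_fconj]
  exact convex_iInter₂ fun z _ ↦ convex_halfSpace_le
    ((innerₛₗ ℝ z.1 ∘ₗ LinearMap.fst ℝ E ℝ - LinearMap.snd ℝ E ℝ).isLinear) z.2

theorem convexEpi_inner_sub (u : E) (δ : ℝ) :
    ConvexEpi fun v ↦ ((inner ℝ v u - δ : ℝ) : EReal) := by
  have hhalf : epigraph (fun v ↦ ((inner ℝ v u - δ : ℝ) : EReal)) =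
      {z | inner ℝ z.1 u - z.2 ≤ δ} :=
    Set.ext fun z ↦ EReal.coe_le_coe_iff.trans sub_le_comm
  rw [convexEpi_iff, hhalf]
  exact convex_halfSpace_le
    ((innerₗ E).flip u ∘ₗ LinearMap.fst ℝ E ℝ - LinearMap.snd ℝ E ℝ).isLinear δ

theorem isClosed_epigraph_fconj (f : E → EReal) : IsClosed (epigraph (fconj f)) := by
  rw [epigraph_fconj]
  exact isClosed_biInter fun z _ ↦ isClosed_le (by fun_prop) continuous_const

theorem add_mem_epigraph_fconj {a : E} {κ : ℝ} (ha : ∀ u ∈ edom f, inner ℝ a u ≤ κ) {z : E × ℝ}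
    (hz : z ∈ epigraph (fconj f)) : z + (a, κ) ∈ epigraph (fconj f) := by
  refine fconj_le_coe_iff.2 fun w hw ↦ ?_
  have hzw := fconj_le_coe_iff.1 hz w hw
  have haw := ha w.1 (fst_image_epigraph f ▸ Set.mem_image_of_mem _ hw)
  rw [Prod.fst_add, Prod.snd_add, inner_add_right, real_inner_comm a]
  linarith

theorem epigraph_subset_epigraph_fconj_fconj (f : E → EReal) :
    epigraph f ⊆ epigraph (fconj (fconj f)) := by
  refine fun z hz ↦ fconj_le_coe_iff.2 fun w hw ↦ ?_
  have := fconj_le_coe_iff.1 hw z hz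
  rw [real_inner_comm]
  linarith

theorem fconj_zero_nonpos_of_nonneg (hf : ∀ v, 0 ≤ f v) : fconj f 0 ≤ 0 :=
  fconj_le_coe_iff.2 fun z hz ↦ by
    have := EReal.coe_nonneg.1 ((hf z.1).trans hz)
    simpa using this

theorem edom_fconj_nonempty_of_nonneg (hf : ∀ v, 0 ≤ f v) : (edom (fconj f)).Nonempty :=
  ⟨0, (fconj_zero_nonpos_of_nonneg hf).trans_lt EReal.zero_lt_top⟩

theorem fconj_nonneg_of_apply_zero_nonpos (hf : f 0 ≤ 0) (v : E) : 0 ≤ fconj f v :=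
  calc (0 : EReal) ≤ ((inner ℝ (0 : E) v : ℝ) : EReal) - f 0 := by
        rw [inner_zero_left]; exact EReal.sub_nonneg (by simp) (by simp) |>.2 hf
    _ ≤ fconj f v := le_iSup (fun w ↦ ((inner ℝ w v : ℝ) : EReal) - f w) 0

theorem epigraph_nonempty_of_mem_epigraph_fconj_fconj (hf : (edom (fconj f)).Nonempty) {z : E × ℝ}
    (hz : z ∈ epigraph (fconj (fconj f))) : (epigraph f).Nonempty := by
  obtain ⟨u, -⟩ := hf
  by_contra hempty
  have hu : fconj f u ≤ (inner ℝ u z.1 - z.2 - 1 : ℝ) :=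
    fconj_le_coe_iff.2 fun w hw ↦ absurd ⟨w, hw⟩ hempty
  have := fconj_le_coe_iff.1 hz (u, inner ℝ u z.1 - z.2 - 1) hu
  linarith

theorem nonpos_of_forall_mem_epigraph_lt {u : E} {β α : ℝ} {w : E × ℝ} (hw : w ∈ epigraph f)
    (h : ∀ z ∈ epigraph f, inner ℝ z.1 u + β * z.2 < α) : β ≤ 0 := by
  by_contra! hβ
  have hgap := h w hw
  let δ := (α - (inner ℝ w.1 u + β * w.2)) / β
  have hδ : 0 ≤ δ := div_nonneg (by linarith) hβ.le
  have hup : (w.1, w.2 + δ) ∈ epigraph f :=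
    le_trans hw (EReal.coe_le_coe_iff.2 (by simpa using hδ))
  have := h _ hup
  have hβδ : β * δ = α - (inner ℝ w.1 u + β * w.2) := mul_div_cancel₀ _ hβ.ne'
  linarith

theorem inner_sub_mul_le_of_mem_epigraph_fconj_fconj {u : E} {c α : ℝ} (hc : 0 < c)
    (h : ∀ w ∈ epigraph f, inner ℝ w.1 u - c * w.2 ≤ α) {z : E × ℝ}
    (hz : z ∈ epigraph (fconj (fconj f))) : inner ℝ z.1 u - c * z.2 ≤ α := by
  have hmem : (c⁻¹ • u, c⁻¹ * α) ∈ epigraph (fconj f) := fconj_le_coe_iff.2 fun w hw ↦ by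
    rw [inner_smul_right]
    have := mul_le_mul_of_nonneg_left (h w hw) (inv_pos.2 hc).le
    rwa [mul_sub, inv_mul_cancel_left₀ hc.ne'] at this
  have := mul_le_mul_of_nonneg_left (fconj_le_coe_iff.1 hz _ hmem) hc.le
  rw [inner_smul_left, conj_trivial, mul_sub, mul_inv_cancel_left₀ hc.ne',
    mul_inv_cancel_left₀ hc.ne', real_inner_comm] at this
  linarith

variable [CompleteSpace E]

theorem exists_inner_add_mul_lt_of_notMem {C : Set (E × ℝ)} (hC : Convex ℝ C) (hcl : IsClosed C)
    {z : E × ℝ} (hz : z ∉ C) :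
    ∃ (u : E) (β α : ℝ), (∀ w ∈ C, inner ℝ w.1 u + β * w.2 < α) ∧
      α < inner ℝ z.1 u + β * z.2 := by
  obtain ⟨ℓ, α, hlt, hgt⟩ := geometric_hahn_banach_closed_point hC hcl hz
  let u := (InnerProductSpace.toDual ℝ E).symm (ℓ ∘L .inl ℝ E ℝ)
  have hℓ (w : E × ℝ) : ℓ w = inner ℝ w.1 u + ℓ (0, 1) * w.2 :=
    calc ℓ w = ℓ (w.1, 0) + ℓ (w.2 • (0, 1)) := by simp [← map_add]
      _ = inner ℝ w.1 u + ℓ (0, 1) * w.2 := by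
        rw [real_inner_comm, InnerProductSpace.toDual_symm_apply, map_smul, smul_eq_mul, mul_comm]
        rfl
  exact ⟨u, ℓ (0, 1), α, fun w hw ↦ hℓ w ▸ hlt w hw, hℓ z ▸ hgt⟩

theorem epigraph_fconj_fconj (hf : (edom (fconj f)).Nonempty) :
    epigraph (fconj (fconj f)) = closure (convexHull ℝ (epigraph f)) := by
  refine subset_antisymm (fun z hz ↦ ?_) <| closure_minimal
    (convexHull_min (epigraph_subset_epigraph_fconj_fconj f) (convexEpi_fconj _))
    (isClosed_epigraph_fconj _)
  by_contra hzC
  obtain ⟨u, β, α, hlt, hgt⟩ := exists_inner_add_mul_lt_of_notMem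
    (convex_convexHull ℝ (epigraph f)).closure isClosed_closure hzC
  replace hlt (w) (hw : w ∈ epigraph f) := hlt w (subset_closure (subset_convexHull ℝ _ hw))
  obtain ⟨⟨u₀, t₀⟩, h₀⟩ := edom_nonempty_iff.1 hf
  obtain ⟨w, hw⟩ := epigraph_nonempty_of_mem_epigraph_fconj_fconj hf hz
  have hβ : β ≤ 0 := nonpos_of_forall_mem_epigraph_lt hw hlt
  -- A vertical hyperplane (`β = 0`) is tilted by adding the affine minorant `(u₀, t₀)` of `f`; a
  -- large multiple `n` of the separating functional keeps `z` strictly on the wrong side.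
  obtain ⟨n, hn⟩ := exists_nat_gt
    ((z.2 + t₀ - inner ℝ z.1 u₀) / (inner ℝ z.1 u + β * z.2 - α))
  rw [div_lt_iff₀ (by linarith)] at hn
  have hle := inner_sub_mul_le_of_mem_epigraph_fconj_fconj
    (u := (n : ℝ) • u + u₀) (c := 1 - n * β) (α := n * α + t₀)
    (by linarith [mul_nonpos_of_nonneg_of_nonpos n.cast_nonneg hβ])
    (fun w hw ↦ by
      have h₁ := mul_le_mul_of_nonneg_left (hlt w hw).le n.cast_nonneg
      have h₂ := fconj_le_coe_iff.1 h₀ w hw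
      rw [inner_add_right, inner_smul_right]
      linarith) hz
  rw [inner_add_right, inner_smul_right] at hle
  linarith

theorem closure_edom_fconj_fconj (hf : (edom (fconj f)).Nonempty) :
    closure (edom (fconj (fconj f))) = closure (convexHull ℝ (edom f)) := by
  refine subset_antisymm (closure_minimal ?_ isClosed_closure) (closure_mono (convexHull_min ?_ ?_))
  · rw [← fst_image_epigraph, ← fst_image_epigraph, epigraph_fconj_fconj hf]
    exact (image_closure_subset_closure_image continuous_fst).trans_eq <| by
      rw [← LinearMap.coe_fst (R := ℝ), LinearMap.image_convexHull]
  · rw [← fst_image_epigraph, ← fst_image_epigraph]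
    exact Set.image_mono (epigraph_subset_epigraph_fconj_fconj f)
  · exact (convexEpi_fconj _).convex_edom

theorem mem_closure_convexHull_graph_of_fconj_fconj_nonpos (hf : ∀ v, 0 ≤ f v) {q : E}
    (hq : fconj (fconj f) q ≤ 0) :
    (q, (0 : ℝ)) ∈ closure (convexHull ℝ {z : E × ℝ | f z.1 = z.2}) := by
  have hmem : (q, (0 : ℝ)) ∈ closure (convexHull ℝ (epigraph f)) :=
    epigraph_fconj_fconj (edom_fconj_nonempty_of_nonneg hf) ▸ hq
  obtain ⟨w, hw, hlim⟩ := mem_closure_iff_seq_limit.1 hmem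
  choose t ht ht₀ htw using fun n ↦ exists_mem_convexHull_graph_le hf (hw n)
  have hlim' := (Prod.tendsto_iff _ _).1 hlim
  exact mem_closure_of_tendsto
    (hlim'.1.prodMk_nhds (squeeze_zero ht₀ htw hlim'.2)) (.of_forall ht)

end Conjugate

section Proximity

variable {E : Type*} [NormedAddCommGroup E] [InnerProductSpace ℝ E] {f : E → EReal}

theorem prox_eq_of_forall_inner_le {x p : E} {r : ℝ} (hp : f p = r)
    (h : ∀ z, ((r + inner ℝ (x - p) (z - p) : ℝ) : EReal) ≤ f z) : prox f x = p := by
  have hgrowth (z : E) : ((r + ‖x - p‖ ^ 2 / 2 + ‖z - p‖ ^ 2 / 2 : ℝ) : EReal) ≤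
      f z + ((‖x - z‖ ^ 2 / 2 : ℝ) : EReal) :=
    calc ((r + ‖x - p‖ ^ 2 / 2 + ‖z - p‖ ^ 2 / 2 : ℝ) : EReal)
      _ = ((r + inner ℝ (x - p) (z - p) : ℝ) : EReal) + ((‖x - z‖ ^ 2 / 2 : ℝ) : EReal) := by
        rw [← EReal.coe_add, ← sub_sub_sub_cancel_right x z p, norm_sub_sq_real (x - p)]
        ring_nf
      _ ≤ f z + ((‖x - z‖ ^ 2 / 2 : ℝ) : EReal) := by gcongr; exact h z
  have hmin (z : E) :
      f p + ((‖x - p‖ ^ 2 / 2 : ℝ) : EReal) ≤ f z + ((‖x - z‖ ^ 2 / 2 : ℝ) : EReal) := by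
    refine le_trans ?_ (hgrowth z)
    rw [hp, ← EReal.coe_add, EReal.coe_le_coe_iff]
    linarith [sq_nonneg ‖z - p‖]
  have hex : ∃ p, ∀ z,
      f p + ((‖x - p‖ ^ 2 / 2 : ℝ) : EReal) ≤ f z + ((‖x - z‖ ^ 2 / 2 : ℝ) : EReal) := ⟨p, hmin⟩
  have hle := (hgrowth (prox f x)).trans (Classical.epsilon_spec hex p)
  rw [hp, ← EReal.coe_add, EReal.coe_le_coe_iff] at hle
  have hzero : ‖prox f x - p‖ ^ 2 = 0 := le_antisymm (by linarith) (sq_nonneg _)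
  simpa [sub_eq_zero] using hzero

theorem prox_smulE_eq_of_forall_inner_le {x p u : E} {γ r : ℝ} (hγ : 0 ≤ γ) (hx : x = p + γ • u)
    (hp : f p = r) (h : ∀ z, ((r + inner ℝ (z - p) u : ℝ) : EReal) ≤ f z) :
    prox (smulE γ f) x = p := by
  refine prox_eq_of_forall_inner_le (r := γ * r) (by rw [smulE, hp, EReal.coe_mul]) fun z ↦ ?_
  calc ((γ * r + inner ℝ (x - p) (z - p) : ℝ) : EReal)
    _ = γ * ((r + inner ℝ (z - p) u : ℝ) : EReal) := by
      rw [← EReal.coe_mul, hx, add_sub_cancel_left, inner_smul_left, conj_trivial,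
        real_inner_comm, mul_add]
    _ ≤ smulE γ f z := mul_le_mul_of_nonneg_left (h z) (EReal.coe_nonneg.2 hγ)

variable [CompleteSpace E]

theorem projC_mem_and_inner_le_zero {C : Set E} (hne : C.Nonempty) (hcl : IsClosed C)
    (hC : Convex ℝ C) (x : E) :
    projC C x ∈ C ∧ ∀ w ∈ C, inner ℝ (x - projC C x) (w - projC C x) ≤ 0 := by
  have hbdd : BddBelow (Set.range fun w : C ↦ ‖x - w‖) :=
    ⟨0, Set.forall_mem_range.2 fun w ↦ norm_nonneg _⟩
  obtain ⟨v, hv, hvx⟩ := exists_norm_eq_iInf_of_complete_convex hne hcl.isComplete hC x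
  have hex : ∃ p, p ∈ C ∧ ∀ w ∈ C, ‖x - p‖ ≤ ‖x - w‖ :=
    ⟨v, hv, fun w hw ↦ hvx.trans_le (ciInf_le hbdd ⟨w, hw⟩)⟩
  obtain ⟨hmem, hmin⟩ : projC C x ∈ C ∧ ∀ w ∈ C, ‖x - projC C x‖ ≤ ‖x - w‖ :=
    Classical.epsilon_spec hex
  have : Nonempty C := hne.to_subtype
  exact ⟨hmem, (norm_eq_iInf_iff_real_inner_le_zero hC hmem).1 <|
    le_antisymm (le_ciInf fun w ↦ hmin w w.2) (ciInf_le hbdd ⟨_, hmem⟩)⟩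

theorem inner_sub_projC_closure_le_zero {C : Set E} (hne : C.Nonempty) (hC : Convex ℝ C) (x : E)
    {w : E} (hw : w ∈ C) : inner ℝ (x - projC (closure C) x) (w - projC (closure C) x) ≤ 0 :=
  (projC_mem_and_inner_le_zero hne.closure isClosed_closure hC.closure x).2 w (subset_closure hw)

theorem prox_eq_projC {C : Set E} (hne : C.Nonempty) (hcl : IsClosed C) (hC : Convex ℝ C) {x : E}
    (h₀ : f (projC C x) = 0) (hnonneg : ∀ z ∈ C, 0 ≤ f z) (htop : ∀ z ∉ C, f z = ⊤) :
    prox f x = projC C x := by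
  refine prox_eq_of_forall_inner_le (r := 0) h₀ fun z ↦ ?_
  by_cases hz : z ∈ C
  · have := (projC_mem_and_inner_le_zero hne hcl hC x).2 z hz
    exact (EReal.coe_le_coe_iff.2 (by simpa using this)).trans (hnonneg z hz)
  · exact (htop z hz).symm ▸ le_top

theorem prox_rscale_zero (hne : (edom f).Nonempty) (hf : ConvexEpi f) (x : E) :
    prox (rscale 0 f) x = projC (closure (edom f)) x := by
  have hmem := (projC_mem_and_inner_le_zero hne.closure isClosed_closure
    hf.convex_edom.closure x).1
  exact prox_eq_projC hne.closure isClosed_closure hf.convex_edom.closure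
    (by simp [rscale, hmem]) (fun z hz ↦ by simp [rscale, hz]) (fun z hz ↦ by simp [rscale, hz])

theorem prox_rscale_of_nonneg (hf : ConvexEpi f) (hnonneg : ∀ z, 0 ≤ f z) {ξ : ℝ} (hξ : 0 ≤ ξ)
    {x : E} (h₀ : f (projC (closure (edom f)) x) = 0) :
    prox (rscale ξ f) x = projC (closure (edom f)) x := by
  have hne : (edom f).Nonempty := ⟨_, mem_edom_of_eq_zero h₀⟩
  rcases hξ.eq_or_lt with rfl | hξ
  · exact prox_rscale_zero hne hf x
  refine prox_eq_projC hne.closure isClosed_closure hf.convex_edom.closure ?_ ?_ ?_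
  · simp [rscale, hξ.ne', h₀]
  · intro z _
    simpa [rscale, hξ.ne'] using mul_nonneg (EReal.coe_nonneg.2 hξ.le) (hnonneg z)
  · intro z hz
    have : f z = ⊤ := not_lt_top_iff.1 fun h ↦ hz (subset_closure h)
    simp [rscale, hξ.ne', this, EReal.coe_mul_top_of_pos hξ]

end Proximity

section HautEnv

variable {G : Type*} {s : G → EReal}

theorem pos_of_mem_sdom {v : G} (hv : v ∈ sdom s) {r : ℝ} (hr : s v = r) : 0 < r :=
  EReal.coe_pos.1 (hr ▸ hv.1)

theorem phaut_nonneg (s : G → EReal) (v : G) : 0 ≤ phaut s v := by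
  unfold phaut
  split_ifs with h
  exacts [h.1.le, le_top]

theorem phaut_eq_coe_iff {v : G} {r : ℝ} : phaut s v = r ↔ v ∈ sdom s ∧ s v = r := by
  unfold phaut sdom
  split_ifs with h
  · exact (and_iff_right h).symm
  · exact iff_of_false (EReal.coe_ne_top r).symm fun hv ↦ h hv.1

theorem edom_phaut (s : G → EReal) : edom (phaut s) = sdom s := by
  ext v
  change phaut s v < ⊤ ↔ 0 < s v ∧ s v < ⊤
  unfold phaut
  split_ifs with h
  · exact iff_of_true h.2 h
  · exact iff_of_false (lt_irrefl _) h

variable [NormedAddCommGroup G] [InnerProductSpace ℝ G]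

theorem hautEnv_nonneg (s : G → EReal) (v : G) : 0 ≤ hautEnv s v :=
  fconj_nonneg_of_apply_zero_nonpos (fconj_zero_nonpos_of_nonneg (phaut_nonneg s)) v

theorem convexEpi_hautEnv (s : G → EReal) : ConvexEpi (hautEnv s) :=
  convexEpi_fconj _

variable [CompleteSpace G]

theorem closure_edom_hautEnv (s : G → EReal) :
    closure (edom (hautEnv s)) = closure (convexHull ℝ (sdom s)) := by
  rw [← edom_phaut]
  exact closure_edom_fconj_fconj (edom_fconj_nonempty_of_nonneg (phaut_nonneg s))

theorem mem_closure_convexHull_graph_of_hautEnv_eq_zero {q : G} (hq : hautEnv s q = 0) :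
    (q, (0 : ℝ)) ∈ closure (convexHull ℝ {z : G × ℝ | z.1 ∈ sdom s ∧ s z.1 = z.2}) := by
  simpa only [phaut_eq_coe_iff] using
    mem_closure_convexHull_graph_of_fconj_fconj_nonpos (phaut_nonneg s) hq.le

end HautEnv

section Perspective

variable {H G : Type*} [NormedAddCommGroup H] [InnerProductSpace ℝ H]
  [NormedAddCommGroup G] [InnerProductSpace ℝ G] {φ : H → EReal} {s : G → EReal}

theorem prePersp_pairHG {v : G} (hv : v ∈ sdom s) {r : ℝ} (hr : s v = r) (x : H) :
    prePersp φ s (pairHG x v) = r * φ (r⁻¹ • x) := by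
  rw [← EReal.toReal_coe r, ← hr, EReal.coe_toReal hv.2.ne (ne_bot_of_gt hv.1)]
  exact if_pos hv

theorem inner_sub_le_prePersp {p : H} (hp : fconj φ p ≤ 0) {d : G} {δ : ℝ}
    (hd : ∀ v ∈ sdom s, inner ℝ v d ≤ δ) (z : WithLp 2 (H × G)) :
    ((inner ℝ z (pairHG p d) - δ : ℝ) : EReal) ≤ prePersp φ s z := by
  obtain ⟨⟨x, v⟩, rfl⟩ := (WithLp.equiv 2 (H × G)).symm.surjective z
  change _ ≤ prePersp φ s (pairHG x v)
  by_cases hv : v ∈ sdom s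
  · obtain ⟨r, hr⟩ : ∃ r : ℝ, s v = r := ⟨_, (EReal.coe_toReal hv.2.ne (ne_bot_of_gt hv.1)).symm⟩
    have hr₀ := pos_of_mem_sdom hv hr
    rw [prePersp_pairHG hv hr]
    calc ((inner ℝ x p + inner ℝ v d - δ : ℝ) : EReal)
      _ ≤ (r * (inner ℝ (r⁻¹ • x) p - 0) : ℝ) := by
        rw [EReal.coe_le_coe_iff, inner_smul_left, conj_trivial, sub_zero,
          mul_inv_cancel_left₀ hr₀.ne']
        linarith [hd v hv]
      _ ≤ r * φ (r⁻¹ • x) := by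
        rw [EReal.coe_mul]
        exact mul_le_mul_of_nonneg_left (inner_sub_le_of_fconj_le hp _) (EReal.coe_nonneg.2 hr₀.le)
  · exact le_top.trans_eq (if_neg hv).symm

theorem inner_sub_le_persp {p : H} (hp : fconj φ p ≤ 0) {d : G} {δ : ℝ}
    (hd : ∀ v ∈ sdom s, inner ℝ v d ≤ δ) (z : WithLp 2 (H × G)) :
    ((inner ℝ z (pairHG p d) - δ : ℝ) : EReal) ≤ persp φ s z :=
  le_sSup ⟨fun z ↦ ((inner ℝ z (pairHG p d) - δ : ℝ) : EReal),
    (continuous_coe_real_ereal.comp (by fun_prop)).lowerSemicontinuous,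
    convexEpi_inner_sub _ _, inner_sub_le_prePersp hp hd, rfl⟩

variable [CompleteSpace H]

theorem minorant_prePersp_le {g : WithLp 2 (H × G) → EReal} (hlsc : LowerSemicontinuous g)
    (hcv : ConvexEpi g) (hg : ∀ z, g z ≤ prePersp φ s z) (hdom : (edom (fconj φ)).Nonempty)
    {v : G} (hv : v ∈ sdom s) {r : ℝ} (hr : s v = r) {w : H × ℝ}
    (hw : w ∈ epigraph (fconj (fconj φ))) : g (pairHG (r • w.1) v) ≤ ((r * w.2 : ℝ) : EReal) := by
  have hr₀ := pos_of_mem_sdom hv hr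
  let ℓ : H × ℝ →L[ℝ] WithLp 2 (H × G) × ℝ :=
    ((WithLp.prodContinuousLinearEquiv 2 ℝ H G).symm.toContinuousLinearMap ∘L
      (r • ContinuousLinearMap.fst ℝ H ℝ).prod 0).prod (r • ContinuousLinearMap.snd ℝ H ℝ)
  let L : H × ℝ →ᴬ[ℝ] WithLp 2 (H × G) × ℝ :=
    ℓ.toContinuousAffineMap + .const ℝ (H × ℝ) (pairHG 0 v, 0)
  have hL (z : H × ℝ) : L z = (pairHG (r • z.1) v, r * z.2) := by
    simp [L, ℓ, pairHG, ← WithLp.toLp_add]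
  have hepi : epigraph φ ⊆ L ⁻¹' epigraph g := by
    intro z hz
    rw [Set.mem_preimage, hL]
    calc g (pairHG (r • z.1) v)
      _ ≤ r * φ z.1 := by
        simpa only [prePersp_pairHG hv hr, inv_smul_smul₀ hr₀.ne'] using hg (pairHG (r • z.1) v)
      _ ≤ r * z.2 := mul_le_mul_of_nonneg_left hz (EReal.coe_nonneg.2 hr₀.le)
      _ = (r * z.2 : ℝ) := (EReal.coe_mul r z.2).symm
  have hmem : w ∈ L ⁻¹' epigraph g :=
    closure_convexHull_subset_preimage_epigraph hlsc hcv hepi (epigraph_fconj_fconj hdom ▸ hw)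
  rwa [Set.mem_preimage, hL] at hmem

theorem minorant_prePersp_smul_add_le {g : WithLp 2 (H × G) → EReal}
    (hlsc : LowerSemicontinuous g) (hcv : ConvexEpi g) (hg : ∀ z, g z ≤ prePersp φ s z)
    (hdom : (edom (fconj φ)).Nonempty) {a : H} {κ : ℝ}
    (ha : ∀ u ∈ edom (fconj φ), inner ℝ a u ≤ κ) {v : G} (hv : v ∈ sdom s) {r : ℝ} (hr : s v = r)
    {w : H × ℝ} (hw : w ∈ epigraph (fconj (fconj φ))) :
    g (pairHG (r • w.1 + a) v) ≤ ((r * w.2 + κ : ℝ) : EReal) := by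
  have hr₀ := pos_of_mem_sdom hv hr
  have hshift : w + (r⁻¹ • a, r⁻¹ * κ) ∈ epigraph (fconj (fconj φ)) :=
    add_mem_epigraph_fconj (fun u hu ↦ by
      rw [inner_smul_left, conj_trivial]
      exact mul_le_mul_of_nonneg_left (ha u hu) (inv_pos.2 hr₀).le) hw
  simpa only [Prod.fst_add, Prod.snd_add, smul_add, mul_add, smul_inv_smul₀ hr₀.ne',
    mul_inv_cancel_left₀ hr₀.ne'] using minorant_prePersp_le hlsc hcv hg hdom hv hr hshift

variable [CompleteSpace G]

theorem persp_pairHG_le (hφ : (edom φ).Nonempty) (hdom : (edom (fconj φ)).Nonempty) {a : H}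
    {κ : ℝ} (ha : ∀ u ∈ edom (fconj φ), inner ℝ a u ≤ κ) {q : G} (hq : hautEnv s q = 0) :
    persp φ s (pairHG a q) ≤ κ := by
  obtain ⟨w, hw⟩ := edom_nonempty_iff.1 hφ
  refine sSup_le ?_
  rintro _ ⟨g, hlsc, hcv, hg, rfl⟩
  let ℓ : G × ℝ →L[ℝ] WithLp 2 (H × G) × ℝ :=
    ((WithLp.prodContinuousLinearEquiv 2 ℝ H G).symm.toContinuousLinearMap ∘L
      ((ContinuousLinearMap.snd ℝ G ℝ).smulRight w.1).prod (.fst ℝ G ℝ)).prod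
      ((ContinuousLinearMap.snd ℝ G ℝ).smulRight w.2)
  let L : G × ℝ →ᴬ[ℝ] WithLp 2 (H × G) × ℝ :=
    ℓ.toContinuousAffineMap + .const ℝ (G × ℝ) (pairHG a 0, κ)
  have hL (v : G) (r : ℝ) : L (v, r) = (pairHG (r • w.1 + a) v, r * w.2 + κ) := by
    simp [L, ℓ, pairHG, ← WithLp.toLp_add]
  have hgraph : {z : G × ℝ | z.1 ∈ sdom s ∧ s z.1 = z.2} ⊆ L ⁻¹' epigraph g := by
    rintro ⟨v, r⟩ ⟨hv, hr⟩
    rw [Set.mem_preimage, hL]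
    exact minorant_prePersp_smul_add_le hlsc hcv hg hdom ha hv hr
      (epigraph_subset_epigraph_fconj_fconj φ hw)
  have hmem : (q, (0 : ℝ)) ∈ L ⁻¹' epigraph g :=
    closure_convexHull_subset_preimage_epigraph hlsc hcv hgraph
      (mem_closure_convexHull_graph_of_hautEnv_eq_zero hq)
  rw [Set.mem_preimage, hL] at hmem
  simpa [epigraph] using hmem

theorem persp_pairHG_eq {a p : H} (hp : fconj φ p = 0)
    (ha : ∀ u ∈ edom (fconj φ), inner ℝ a u ≤ inner ℝ a p) {q : G} (hq : hautEnv s q = 0) :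
    persp φ s (pairHG a q) = (inner ℝ a p : ℝ) := by
  refine le_antisymm (persp_pairHG_le
    (edom_nonempty_of_fconj_ne_bot (u := p) (by simp [hp])) ⟨p, mem_edom_of_eq_zero hp⟩ ha hq) ?_
  simpa [pairHG] using
    inner_sub_le_persp hp.le (d := (0 : G)) (δ := 0) (s := s) (by simp) (pairHG a q)

theorem prox_smulE_persp {γ : ℝ} (hγ : 0 < γ) {x p : H} {y q : G} (hp : fconj φ p = 0)
    (hq : hautEnv s q = 0) (hxp : ∀ u ∈ edom (fconj φ), inner ℝ (γ⁻¹ • x - p) (u - p) ≤ 0)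
    (hyq : ∀ v ∈ sdom s, inner ℝ (y - q) (v - q) ≤ 0) :
    prox (smulE γ (persp φ s)) (pairHG x y) = pairHG (x - γ • p) q := by
  let d := γ⁻¹ • (y - q)
  have ha (u : H) (hu : u ∈ edom (fconj φ)) : inner ℝ (x - γ • p) u ≤ inner ℝ (x - γ • p) p := by
    have hx : x - γ • p = γ • (γ⁻¹ • x - p) := by rw [smul_sub, smul_inv_smul₀ hγ.ne']
    rw [← sub_nonpos, ← inner_sub_right, hx, inner_smul_left]
    exact mul_nonpos_of_nonneg_of_nonpos hγ.le (hxp u hu)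
  have hd (v : G) (hv : v ∈ sdom s) : inner ℝ v d ≤ inner ℝ q d := by
    rw [← sub_nonpos, ← inner_sub_left, inner_smul_right, real_inner_comm]
    exact mul_nonpos_of_nonneg_of_nonpos (inv_pos.2 hγ).le (hyq v hv)
  refine prox_smulE_eq_of_forall_inner_le (u := pairHG p d) hγ.le ?_
    (persp_pairHG_eq hp ha hq) fun z ↦ ?_
  · simp [pairHG, d, ← WithLp.toLp_smul, ← WithLp.toLp_add, smul_inv_smul₀ hγ.ne']
  · have hinner : inner ℝ (pairHG (x - γ • p) q) (pairHG p d) =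
        inner ℝ (x - γ • p) p + inner ℝ q d := rfl
    rw [inner_sub_left z, hinner, add_sub_left_comm, sub_add_cancel_left, ← sub_eq_add_neg]
    exact inner_sub_le_persp hp.le hd z

end Perspective

section Main

variable {H G : Type*} [NormedAddCommGroup H] [InnerProductSpace ℝ H] [CompleteSpace H]
  [NormedAddCommGroup G] [InnerProductSpace ℝ G] [CompleteSpace G] {φ : H → EReal} {s : G → EReal}

theorem eta9eq_iff_eq_zero {γ : ℝ} (hγ : 0 ≤ γ) {x : H} {y : G} (hmem : (x, y) ∈ Xi1 φ s γ)
    {η : ℝ} (hη : 0 ≤ η) : eta9eq φ s γ x y η ↔ η = 0 := by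
  obtain ⟨hq : hautEnv s _ = 0, hp : fconj φ _ = 0⟩ := hmem
  rw [← closure_edom_hautEnv] at hq
  rw [eta9eq, prox_rscale_of_nonneg (convexEpi_hautEnv s) (hautEnv_nonneg s) (mul_nonneg hγ hη) hq,
    hq, EReal.toReal_zero, mul_zero,
    prox_rscale_zero ⟨_, mem_edom_of_eq_zero hp⟩ (convexEpi_fconj φ), hp, zero_add,
    EReal.coe_eq_zero]

theorem stmt16_general {γ : ℝ} (hγ : 0 < γ)
    {x : H} {y : G} (hmem : (x, y) ∈ Xi1 φ s γ) :
    eta9eq φ s γ x y 0 ∧ (∀ η : ℝ, 0 ≤ η → eta9eq φ s γ x y η → η = 0) ∧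
    prox (smulE γ (persp φ s)) (pairHG x y) =
      pairHG (x - γ • projC (closure (edom (fconj φ))) (γ⁻¹ • x))
        (projC (closure (convexHull ℝ (sdom s))) y) := by
  refine ⟨(eta9eq_iff_eq_zero hγ.le hmem le_rfl).2 rfl,
    fun η hη ↦ (eta9eq_iff_eq_zero hγ.le hmem hη).1, ?_⟩
  obtain ⟨hq : hautEnv s _ = 0, hp : fconj φ _ = 0⟩ := hmem
  have hne : (convexHull ℝ (sdom s)).Nonempty := closure_nonempty_iff.1 <|
    closure_edom_hautEnv s ▸ closure_nonempty_iff.2 ⟨_, mem_edom_of_eq_zero hq⟩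
  exact prox_smulE_persp hγ hp hq
    (fun u ↦ inner_sub_projC_closure_le_zero ⟨_, mem_edom_of_eq_zero hp⟩
      (convexEpi_fconj φ).convex_edom _)
    (fun v hv ↦ inner_sub_projC_closure_le_zero hne (convex_convexHull ℝ _) _
      (subset_convexHull ℝ _ hv))

end Main

/-- Proposition 4.3(i). -/
theorem stmt16 {H G : Type*} [NormedAddCommGroup H] [InnerProductSpace ℝ H] [CompleteSpace H]
    [NormedAddCommGroup G] [InnerProductSpace ℝ G] [CompleteSpace G]
    (φ : H → EReal) (s : G → EReal) (hφ : IsGamma0 φ)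
    (hc1 : ∀ u : H, (⊥ < fconj φ u ∧ fconj φ u ≤ 0) ∨ fconj φ u = ⊤)
    (hc2 : ∃ u : H, ⊥ < fconj φ u ∧ fconj φ u < 0)
    (hs : IsGamma0 s)
    (hS : ∃ v : G, 0 < s v ∧ s v < ⊤)
    (γ : ℝ) (hγ : 0 < γ) (x : H) (y : G) (hmem : (x, y) ∈ Xi1 φ s γ) :
    eta9eq φ s γ x y 0 ∧ (∀ η : ℝ, 0 ≤ η → eta9eq φ s γ x y η → η = 0) ∧
    prox (smulE γ (persp φ s)) (pairHG x y) =
      pairHG (x - γ • projC (closure (edom (fconj φ))) (γ⁻¹ • x))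
        (projC (closure (convexHull ℝ (sdom s))) y) := by
  exact stmt16_general hγ hmem
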